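/- Fix δ > 0 and p > p_c(d). Then P-almost surely, for every n large enough, every ball of radius δn contained in the box [−n,n]^d contains at least δ^d (2n)^d θ(p)/2 points of the infinite cluster C_∞(ω), where θ(p) = P(0 ∈ C_∞) is the percolation density. -/

import Mathlib

open MeasureTheory ProbabilityTheory Filter Topology
open scoped ENNReal NNReal BigOperators

noncomputable section

namespace SRWPC

/-- Vertices of the lattice `ℤ^d`. -/
abbrev V (d : ℕ) := Fin d → ℤ

/-- Index of a nearest-neighbour bond: the bond from `x` to `x + eᵢ`. -/
abbrev EdgeIx (d : ℕ) := V d × Fin d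

/-- Percolation configurations `Ω = {0,1}^{𝔹_d}`. -/
abbrev Config (d : ℕ) := EdgeIx d → Bool

/-- The `i`-th coordinate unit vector. -/
def unitVec (d : ℕ) (i : Fin d) : V d := fun j => if j = i then 1 else 0

/-- The set `𝕌_d` of the `2d` unit vectors. -/
def Ud (d : ℕ) : Finset (V d) :=
  (Finset.univ.image (unitVec d)) ∪ (Finset.univ.image (fun i => -unitVec d i))

/-- The type of nearest-neighbour steps (elements of `𝕌_d`). -/
abbrev Step (d : ℕ) := {e : V d // e ∈ Ud d}

/-- The shift `(τ_x ω)_b = ω_{x+b}`. -/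
def shift {d : ℕ} (x : V d) (ω : Config d) : Config d := fun b => ω (b.1 + x, b.2)

/-- The bond from `x` to `x + e` is open in `ω`. -/
def edgeOpen {d : ℕ} (ω : Config d) (x e : V d) : Prop :=
  ∃ i : Fin d, (e = unitVec d i ∧ ω (x, i) = true) ∨
    (e = -unitVec d i ∧ ω (x - unitVec d i, i) = true)

open Classical in
/-- The number of open bonds incident to `x`. -/
def openDeg {d : ℕ} (ω : Config d) (x : V d) : ℕ :=
  ((Ud d).filter (fun e => edgeOpen ω x e)).card

open Classical in
/-- The transition probability `π_ω(x,e)` of the simple random walk on the cluster. -/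
def trans {d : ℕ} (ω : Config d) (x e : V d) : ℝ :=
  if edgeOpen ω x e then 1 / openDeg ω x else 0

/-- `γ` restricted to `{0,…,n}` is a nearest-neighbour open path in `ω`. -/
def IsOpenPath {d : ℕ} (ω : Config d) (γ : ℕ → V d) (n : ℕ) : Prop :=
  ∀ k < n, (γ (k + 1) - γ k) ∈ Ud d ∧ edgeOpen ω (γ k) (γ (k + 1) - γ k)

/-- `x` lies in the box `[-r,r]^d`. -/
def inBox {d : ℕ} (x : V d) (r : ℝ) : Prop := ∀ i, |(x i : ℝ)| ≤ r

/-- `x` is joined to infinity by a nearest-neighbour open path, i.e. `x ∈ 𝒞_∞(ω)`. -/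
def memCluster {d : ℕ} (ω : Config d) (x : V d) : Prop :=
  ∀ R : ℕ, ∃ (γ : ℕ → V d) (n : ℕ), γ 0 = x ∧ IsOpenPath ω γ n ∧ ¬ inBox (γ n) R

/-- The event `Ω_0 = {0 ∈ 𝒞_∞}`. -/
def cluZero (d : ℕ) : Set (Config d) := {ω | memCluster ω 0}

/-- `P` is the Bernoulli bond percolation product measure with parameter `q`. -/
def IsBernoulli (d : ℕ) (q : ℝ) (P : Measure (Config d)) : Prop :=
  IsProbabilityMeasure P ∧
    ∀ (F : Finset (EdgeIx d)) (a : EdgeIx d → Bool),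
      P {ω | ∀ b ∈ F, ω b = a b} = ∏ b ∈ F, ENNReal.ofReal (if a b then q else 1 - q)

/-- The critical probability `p_c(d)` of bond percolation on `ℤ^d`. -/
def pc (d : ℕ) : ℝ :=
  sInf {q : ℝ | q ∈ Set.Icc (0 : ℝ) 1 ∧
    ∀ P : Measure (Config d), IsBernoulli d q P → 0 < P (cluZero d)}

variable {d : ℕ}

/-- Position of the walk after `k` steps, given the sequence of steps `s`. -/
def pos {n : ℕ} (s : Fin n → Step d) (k : ℕ) : V d :=
  ∑ j ∈ Finset.univ.filter (fun j : Fin n => (j : ℕ) < k), (s j).1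

/-- The environment/step pair `(τ_{X_k} ω, X_{k+1} - X_k)` seen at time `k`. -/
def envPair (ω : Config d) {n : ℕ} (s : Fin n → Step d) (k : Fin n) : Config d × Step d :=
  (shift (pos s k) ω, s k)

/-- Quenched probability of a given sequence of `n` steps under the Markov kernel `κ`. -/
def pathProb (κ : Config d → Step d → ℝ) (ω : Config d) {n : ℕ} (s : Fin n → Step d) : ℝ :=
  ∏ k : Fin n, κ (shift (pos s k) ω) (s k)

/-- The SRWPC transition kernel `π`. -/
def srw (d : ℕ) : Config d → Step d → ℝ := fun ω e => trans ω 0 e.1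

/-- Quenched expectation (under `P_0^{κ,ω}`) of a functional of the first `n` steps. -/
def qE (κ : Config d → Step d → ℝ) (ω : Config d) {n : ℕ} (F : (Fin n → Step d) → ℝ) : ℝ :=
  ∑ s : Fin n → Step d, pathProb κ ω s * F s

/-- Quenched probability (under `P_0^{κ,ω}`) of a set of `n`-step trajectories. -/
def qP (κ : Config d → Step d → ℝ) (ω : Config d) {n : ℕ} (A : Set (Fin n → Step d)) : ℝ :=
  ∑ s : Fin n → Step d, A.indicator (fun s' => pathProb κ ω s') s

/-- Quenched probability, `ℝ≥0∞`-valued. -/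
def qPE (κ : Config d → Step d → ℝ) (ω : Config d) {n : ℕ} (A : Set (Fin n → Step d)) : ℝ≥0∞ :=
  ENNReal.ofReal (qP κ ω A)

/-- The environment-step space `Ω_0 × 𝕌_d`. -/
abbrev EnvSp (d : ℕ) := Config d × Step d

/-- The pair empirical measure `ℒ_n` as a measure. -/
def empMeas (ω : Config d) {n : ℕ} (s : Fin n → Step d) : Measure (EnvSp d) :=
  (n : ℝ≥0∞)⁻¹ • ∑ k : Fin n, Measure.dirac (envPair ω s k)

lemma empMeas_isProb (ω : Config d) {n : ℕ} (hn : n ≠ 0) (s : Fin n → Step d) :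
    IsProbabilityMeasure (empMeas ω s) := by
  constructor
  simp only [empMeas, Measure.smul_apply, Measure.coe_finset_sum, Finset.sum_apply,
    Measure.dirac_apply_of_mem (Set.mem_univ _), smul_eq_mul]
  rw [Finset.sum_const, Finset.card_univ, Fintype.card_fin, nsmul_eq_mul, mul_one,
    ENNReal.inv_mul_cancel]
  · exact_mod_cast hn
  · exact ENNReal.natCast_ne_top n

/-- The pair empirical measure `ℒ_{n+1}` as a probability measure. -/
def empPM (ω : Config d) {n : ℕ} (s : Fin (n + 1) → Step d) : ProbabilityMeasure (EnvSp d) :=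
  ⟨empMeas ω s, empMeas_isProb ω (Nat.succ_ne_zero n) s⟩

/-- First marginal `(μ)_1` of a measure on `Ω_0 × 𝕌_d`. -/
def marg1 (μ : Measure (EnvSp d)) : Measure (Config d) := μ.map Prod.fst

/-- Second marginal `(μ)_2` of a measure on `Ω_0 × 𝕌_d`. -/
def marg2 (μ : Measure (EnvSp d)) : Measure (Config d) := μ.map (fun q => shift q.2.1 q.1)

/-- The slice `dμ(·, e)` of a measure on `Ω_0 × 𝕌_d` at a fixed step `e`. -/
def slice (μ : Measure (EnvSp d)) (e : Step d) : Measure (Config d) :=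
  (μ.restrict (Set.univ ×ˢ {e})).map Prod.fst

/-- The space `ℳ_1⋆`: probability measures on `Ω_0 × 𝕌_d` whose two marginals coincide and
are absolutely continuous w.r.t. `P₀`, and whose densities `dμ(ω,e)/d(μ)_1(ω)` are positive
precisely on open edges, `P₀`-a.s. -/
def M1star (d : ℕ) (P₀ : Measure (Config d)) : Set (ProbabilityMeasure (EnvSp d)) :=
  {μ | marg1 μ.toMeasure = marg2 μ.toMeasure ∧ marg1 μ.toMeasure ≪ P₀ ∧
    ∃ ρ : Step d → Config d → ℝ≥0∞, (∀ e, Measurable (ρ e)) ∧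
      (∀ e, slice μ.toMeasure e = (marg1 μ.toMeasure).withDensity (ρ e)) ∧
      (∀ e : Step d, ∀ᵐ ω ∂P₀, (0 < ρ e ω ↔ edgeOpen ω 0 e.1))}

/-- The reference measure `π_ω(0,e) d(μ)_1(ω)` on `Ω_0 × 𝕌_d`. -/
def refM (μ : Measure (EnvSp d)) : Measure (EnvSp d) :=
  Measure.sum (fun e : Step d =>
    ((marg1 μ).withDensity (fun ω => ENNReal.ofReal (trans ω 0 e.1))).map (fun ω => (ω, e)))

/-- `x log x - x + 1`. -/
def klFun (x : ℝ) : ℝ := x * Real.log x - x + 1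

open Classical in
/-- The entropy functional `ℑ` (a relative entropy with respect to `refM μ`;
it equals `∫ Σ_e dμ(ω,e) log[dμ(ω,e) / (d(μ)_1(ω) π_ω(0,e))]` on `ℳ_1⋆` and `∞` otherwise). -/
def entI (P₀ : Measure (Config d)) (μ : ProbabilityMeasure (EnvSp d)) : ℝ≥0∞ :=
  if μ ∈ M1star d P₀ ∧ μ.toMeasure ≪ refM μ.toMeasure then
    ∫⁻ q, ENNReal.ofReal (klFun ((μ.toMeasure.rnDeriv (refM μ.toMeasure)) q).toReal)
      ∂(refM μ.toMeasure)
  else ∞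

/-- The pairing `⟨f, μ⟩`. -/
def pairing (f : EnvSp d → ℝ) (μ : ProbabilityMeasure (EnvSp d)) : ℝ :=
  ∫ q, f q ∂μ.toMeasure

/-- The Fenchel–Legendre transform `ℑ⋆` of `ℑ`. -/
def entIstar (P₀ : Measure (Config d)) (f : BoundedContinuousFunction (EnvSp d) ℝ) : EReal :=
  ⨆ μ : ProbabilityMeasure (EnvSp d),
    ((pairing f μ : ℝ) : EReal) - ((entI P₀ μ : ℝ≥0∞) : EReal)

/-- The double Fenchel–Legendre transform `ℑ⋆⋆` of `ℑ`. -/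
def entIbis (P₀ : Measure (Config d)) (μ : ProbabilityMeasure (EnvSp d)) : EReal :=
  ⨆ f : BoundedContinuousFunction (EnvSp d) ℝ,
    ((pairing f μ : ℝ) : EReal) - entIstar P₀ f

/-- The contraction map `ξ(μ) = ∫ Σ_e e dμ(ω,e)`. -/
def xi (μ : ProbabilityMeasure (EnvSp d)) : Fin d → ℝ :=
  fun i => ∫ q, ((q.2.1 i : ℤ) : ℝ) ∂μ.toMeasure

/-- The mean velocity `X_n / n` of a trajectory. -/
def meanVel {n : ℕ} (s : Fin n → Step d) : Fin d → ℝ :=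
  fun i => (n : ℝ)⁻¹ * ((pos s n) i : ℝ)

/-- The class `Π̃` of environment transition kernels. -/
def PiT (d : ℕ) (P₀ : Measure (Config d)) : Set (Config d → Step d → ℝ) :=
  {κ | (∀ e : Step d, Measurable (fun ω => κ ω e)) ∧
    (∀ ω e, 0 ≤ κ ω e) ∧ (∀ e : Step d, ∀ᵐ ω ∂P₀, κ ω e ≤ 1) ∧
    (∀ᵐ ω ∂P₀, ∑ e : Step d, κ ω e = 1) ∧
    (∀ e : Step d, ∀ᵐ ω ∂P₀, (κ ω e = 0 ↔ trans ω 0 e.1 = 0))}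

/-- `φ dP₀` is an invariant probability density for the kernel `κ`. -/
def IsInvDensity (P₀ : Measure (Config d)) (κ : Config d → Step d → ℝ)
    (φ : Config d → ℝ) : Prop :=
  Measurable φ ∧ (∀ ω, 0 ≤ φ ω) ∧ (∫ ω, φ ω ∂P₀) = 1 ∧
    (∀ᵐ ω ∂P₀, φ ω = ∑ e : Step d, κ (shift (-e.1) ω) e * φ (shift (-e.1) ω))

/-- The set `ℰ` of pairs `(π̃, φ)`. -/
def Epairs (d : ℕ) (P₀ : Measure (Config d)) :
    Set ((Config d → Step d → ℝ) × (Config d → ℝ)) :=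
  {q | q.1 ∈ PiT d P₀ ∧ IsInvDensity P₀ q.1 q.2}

/-- The measure `dμ(ω,e) = π̃(ω,e) φ(ω) dP₀(ω)` associated with a pair `(π̃, φ)`. -/
def pairMeasure (P₀ : Measure (Config d)) (κ : Config d → Step d → ℝ)
    (φ : Config d → ℝ) : Measure (EnvSp d) :=
  Measure.sum (fun e : Step d =>
    (P₀.withDensity (fun ω => ENNReal.ofReal (κ ω e * φ ω))).map (fun ω => (ω, e)))

/-- The kernel `dμ/d(μ)_1` associated with a measure on `Ω_0 × 𝕌_d`. -/
def toKappa (μ : Measure (EnvSp d)) : Config d → Step d → ℝ :=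
  fun ω e => ((slice μ e).rnDeriv (marg1 μ) ω).toReal

/-- The density `d(μ)_1/dP₀` associated with a measure on `Ω_0 × 𝕌_d`. -/
def toPhi (P₀ : Measure (Config d)) (μ : Measure (EnvSp d)) : Config d → ℝ :=
  fun ω => ((marg1 μ).rnDeriv P₀ ω).toReal

/-- The environment Markov transition operator `R_κ`. -/
def kernelStep (κ : Config d → Step d → ℝ) (f : Config d → ℝ) : Config d → ℝ :=
  fun ω => ∑ e : Step d, κ ω e * f (shift e.1 ω)

/-- `Q` is an invariant measure for the environment kernel `R_κ`. -/
def IsInvariant (κ : Config d → Step d → ℝ) (Q : Measure (Config d)) : Prop :=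
  ∀ f : Config d → ℝ, Measurable f → (∃ C, ∀ ω, |f ω| ≤ C) →
    ∫ ω, kernelStep κ f ω ∂Q = ∫ ω, f ω ∂Q

/-- Partial sum `Σ_{k<m} f(τ_{X_k}ω, X_{k+1}-X_k)` along a trajectory of length `N`. -/
def partialSumF (f : EnvSp d → ℝ) (ω : Config d) {N : ℕ} (s : Fin N → Step d) (m : ℕ) : ℝ :=
  ∑ k ∈ Finset.univ.filter (fun k : Fin N => (k : ℕ) < m), f (envPair ω s k)

/-- The sum of `G` along the path `γ` up to time `n`. -/
def pathSum (G : Config d → V d → ℝ) (ω : Config d) (γ : ℕ → V d) (n : ℕ) : ℝ :=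
  ∑ k ∈ Finset.range n, G (shift (γ k) ω) (γ (k + 1) - γ k)

/-- The class `𝒢_∞` of gradients: zero mean, uniformly bounded, closed loops. -/
def Ginfty (d : ℕ) (P₀ : Measure (Config d)) : Set (Config d → V d → ℝ) :=
  {G | (∀ e ∈ Ud d, Measurable (fun ω => G ω e)) ∧
    (∀ e ∈ Ud d, ∫ ω, G ω e ∂P₀ = 0) ∧
    (∃ M : ℝ, ∀ e ∈ Ud d, ∀ᵐ ω ∂P₀, |G ω e| ≤ M) ∧
    (∀ᵐ ω ∂P₀, ∀ (γ : ℕ → V d) (n : ℕ),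
      memCluster ω (γ 0) → IsOpenPath ω γ n → γ n = γ 0 → pathSum G ω γ n = 0)}

open Classical in
/-- The corrector `Ψ(ω,x)`: the sum of `G` along some open path from `0` to `x`. -/
def corr (G : Config d → V d → ℝ) (ω : Config d) (x : V d) : ℝ :=
  if h : ∃ q : (ℕ → V d) × ℕ, q.1 0 = 0 ∧ q.1 q.2 = x ∧ IsOpenPath ω q.1 q.2
  then pathSum G ω h.choose.1 h.choose.2 else 0

/-- The chemical distance: minimal length of an open path joining `x` and `y`. -/
def chemDist (ω : Config d) (x y : V d) : ℕ :=
  sInf {n : ℕ | ∃ γ : ℕ → V d, γ 0 = x ∧ γ n = y ∧ IsOpenPath ω γ n}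

open Classical in
/-- The functional `Λ(f,G)`. -/
def Lam (P₀ : Measure (Config d)) (f : EnvSp d → ℝ) (G : Config d → V d → ℝ) : EReal :=
  essSup (fun ω => ((Real.log (∑ e : Step d,
    if edgeOpen ω 0 e.1 then trans ω 0 e.1 * Real.exp (f (ω, e) + G ω e.1) else 0)) : EReal)) P₀

/-- The variational formula `H̄(f) = sup_{μ ∈ ℳ_1⋆} {⟨f,μ⟩ - ℑ(μ)}`. -/
def Hbar (P₀ : Measure (Config d)) (f : EnvSp d → ℝ) : EReal :=
  ⨆ μ ∈ M1star d P₀, ((pairing f μ : ℝ) : EReal) - ((entI P₀ μ : ℝ≥0∞) : EReal)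

/-- The finite σ-algebra `𝓑_k` recording all bonds in the box of size `k` around the origin. -/
def Bsig (d k : ℕ) : MeasurableSpace (Config d) :=
  MeasurableSpace.comap
    (fun (ω : Config d) (b : {b : EdgeIx d // ∀ i, |b.1 i| ≤ (k : ℤ)}) => ω b.1) inferInstance

end SRWPC

/-!
The events `{y ∈ 𝒞_∞}` are the translates of `A = {0 ∈ 𝒞_∞}`, so the claim is a lower bound, uniform
over boxes, for the frequency of visits of the shift to `A`. Translates of a *cylinder* event along
a residue class of `ℤ^d` modulo a large integer are independent, so Hoeffding's bound and
Borel–Cantelli give such a bound for cylinders, simultaneously for the polynomially many boxes of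
proportional size. Approximating `A` by cylinders `G_k`, what is lost is the frequency of visits to
`G_k \ A`; the maximal ergodic inequality for `ℤ^d`-actions (a consequence of Vitali's covering
lemma) makes it small at all scales at once for almost every configuration once `k` is large.
-/

namespace SRWPC

variable {d : ℕ}

section Boxes

/-- The lattice box `x + [-r, r]^d`, i.e. the ball of radius `r` in the sup norm. -/
def box (x : V d) (r : ℕ) : Finset (V d) := Finset.Icc (x - r) (x + r)

lemma mem_box {x y : V d} {r : ℕ} : y ∈ box x r ↔ ∀ i, |y i - x i| ≤ r := by
  simp only [box, Finset.mem_Icc, Pi.le_def, Pi.sub_apply, Pi.add_apply, Pi.natCast_apply,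
    ← forall_and, abs_le]
  exact forall_congr' fun i ↦ by constructor <;> intro h <;> constructor <;> linarith [h.1, h.2]

lemma coe_box (x : V d) (r : ℕ) : (box x r : Set (V d)) = Metric.closedBall x r := by
  ext y
  simp only [Finset.mem_coe, mem_box, Metric.mem_closedBall, dist_pi_le_iff r.cast_nonneg,
    Int.dist_eq]
  exact forall_congr' fun i ↦ by norm_cast

lemma box_mono (x : V d) : Monotone (box x) := fun r s hrs ↦ by
  rw [← Finset.coe_subset, coe_box, coe_box]
  exact Metric.closedBall_subset_closedBall (by exact_mod_cast hrs)

lemma card_box (x : V d) (r : ℕ) : (box x r).card = (2 * r + 1) ^ d := by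
  simp only [box, Pi.card_Icc, Pi.sub_apply, Pi.add_apply, Pi.natCast_apply, Int.card_Icc]
  rw [Finset.prod_congr rfl fun i _ ↦ show (x i + r + 1 - (x i - r)).toNat = 2 * r + 1 by omega]
  simp

lemma box_nonempty (x : V d) (r : ℕ) : (box x r).Nonempty :=
  ⟨x, by simp [mem_box]⟩

lemma box_subset_box_zero {x : V d} {r n : ℕ} (hx : x ∈ box 0 n) : box x r ⊆ box 0 (n + r) := by
  intro y hy
  simp only [mem_box, Pi.zero_apply, sub_zero, Nat.cast_add] at hx hy ⊢
  intro i
  linarith [abs_sub_abs_le_abs_sub (y i) (x i), hx i, hy i]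

lemma mem_box_floor {x y : V d} {a : ℝ} (ha : 0 ≤ a) :
    y ∈ box x ⌊a⌋₊ ↔ ∀ i, |(y i : ℝ) - x i| ≤ a := by
  rw [mem_box]
  refine forall_congr' fun i ↦ ?_
  rw [Int.abs_eq_natAbs, Nat.cast_le, Nat.le_floor_iff ha, Nat.cast_natAbs]
  push_cast
  rfl

lemma exists_subset_box_zero (s : Finset (V d)) : ∃ r, s ⊆ box 0 r := by
  obtain ⟨C, hC⟩ := s.finite_toSet.isBounded.subset_closedBall 0
  refine ⟨⌈C⌉₊, Finset.coe_subset.1 ?_⟩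
  rw [coe_box]
  exact hC.trans (Metric.closedBall_subset_closedBall (Nat.le_ceil C))

lemma box_eq_map (x : V d) (r : ℕ) : box x r = (box 0 r).map (addRightEmbedding x) := by
  rw [box, box, Finset.map_add_right_Icc, zero_sub, zero_add, neg_add_eq_sub, add_comm x]

lemma card_box_mul_le {k : ℕ} (hk : 1 ≤ k) (x : V d) (r : ℕ) :
    (box x (k * r)).card ≤ k ^ d * (box x r).card := by
  rw [card_box, card_box, ← mul_pow]
  gcongr
  linarith

lemma exists_disjoint_boxes_covering (S : Finset (V d)) (r : V d → ℕ) :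
    ∃ u ⊆ S, (u : Set (V d)).PairwiseDisjoint (fun x ↦ box x (r x)) ∧
      S ⊆ u.biUnion fun x ↦ box x (5 * r x) := by
  obtain ⟨u, huS, hdisj, hcov⟩ := Vitali.exists_disjoint_subfamily_covering_enlargement_closedBall
    (S : Set (V d)) id (fun x ↦ (r x : ℝ)) ((S.sup r : ℕ) : ℝ) (fun x hx ↦ by
      exact_mod_cast Finset.le_sup (f := r) hx) 5 (by norm_num)
  lift u to Finset (V d) using S.finite_toSet.subset huS
  refine ⟨u, by exact_mod_cast huS, fun x hx y hy hxy ↦ ?_, fun x hx ↦ ?_⟩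
  · rw [Function.onFun, ← Finset.disjoint_coe, coe_box, coe_box]
    exact hdisj hx hy hxy
  · obtain ⟨y, hy, hxy⟩ := hcov x hx
    refine Finset.mem_biUnion.2 ⟨y, hy, ?_⟩
    rw [← Finset.mem_coe, coe_box]
    simpa using hxy (Metric.mem_closedBall_self (Nat.cast_nonneg _))

open Classical in
lemma mul_card_exists_lt_sum_box_le (a : V d → ℝ≥0∞) (c : ℝ≥0∞) {S T : Finset (V d)} {N : ℕ}
    (hST : ∀ x ∈ S, box x N ⊆ T) :
    c * (S.filter fun x ↦ ∃ n ≤ N, c * (box x n).card < ∑ y ∈ box x n, a y).card ≤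
      5 ^ d * ∑ y ∈ T, a y := by
  set B := S.filter fun x ↦ ∃ n ≤ N, c * (box x n).card < ∑ y ∈ box x n, a y
  have hB : ∀ x ∈ B, ∃ n ≤ N, c * (box x n).card < ∑ y ∈ box x n, a y :=
    fun x hx ↦ (Finset.mem_filter.1 hx).2
  choose! r hrN hr using hB
  obtain ⟨u, huB, hdisj, hcov⟩ := exists_disjoint_boxes_covering B r
  have hcard : B.card ≤ ∑ x ∈ u, 5 ^ d * (box x (r x)).card :=
    (Finset.card_le_card hcov).trans <| Finset.card_biUnion_le.trans <|
      Finset.sum_le_sum fun x _ ↦ card_box_mul_le (by norm_num) x (r x)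
  calc c * B.card ≤ c * ∑ x ∈ u, 5 ^ d * ((box x (r x)).card : ℝ≥0∞) := by
        gcongr; exact_mod_cast hcard
    _ = 5 ^ d * ∑ x ∈ u, c * (box x (r x)).card := by
        rw [← Finset.mul_sum, ← Finset.mul_sum, mul_left_comm]
    _ ≤ 5 ^ d * ∑ x ∈ u, ∑ y ∈ box x (r x), a y := by
        gcongr with x hx; exact (hr x (huB hx)).le
    _ = 5 ^ d * ∑ y ∈ u.biUnion fun x ↦ box x (r x), a y := by rw [Finset.sum_biUnion hdisj]
    _ ≤ 5 ^ d * ∑ y ∈ T, a y := by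
        gcongr
        exact Finset.biUnion_subset.2 fun x hx ↦ (box_mono x (hrN x (huB hx))).trans
          (hST x (Finset.filter_subset _ _ (huB hx)))

end Boxes

section MaximalInequality

variable {Ω : Type*} [AddAction (V d) Ω]

lemma sum_box_vadd (f : Ω → ℝ≥0∞) (x : V d) (n : ℕ) (ω : Ω) :
    ∑ y ∈ box (0 : V d) n, f (y +ᵥ x +ᵥ ω) = ∑ y ∈ box x n, f (y +ᵥ ω) := by
  simp [box_eq_map x, Finset.sum_map, add_vadd]

variable [MeasurableSpace Ω] [MeasurableConstVAdd (V d) Ω]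

lemma measurable_sum_vadd {f : Ω → ℝ≥0∞} (hf : Measurable f) (S : Finset (V d)) :
    Measurable fun ω ↦ ∑ y ∈ S, f (y +ᵥ ω) :=
  Finset.measurable_fun_sum S fun y _ ↦ hf.comp (measurable_const_vadd y)

variable {μ : Measure Ω} [VAddInvariantMeasure (V d) Ω μ]

lemma lintegral_sum_vadd {f : Ω → ℝ≥0∞} (hf : Measurable f) (S : Finset (V d)) :
    ∫⁻ ω, ∑ y ∈ S, f (y +ᵥ ω) ∂μ = S.card * ∫⁻ ω, f ω ∂μ := by
  rw [lintegral_finsetSum _ fun y _ ↦ by fun_prop]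
  simp only [(measurePreserving_vadd _ μ).lintegral_comp hf, Finset.sum_const, nsmul_eq_mul]

lemma mul_measure_exists_le_lt_sum_box_le {f : Ω → ℝ≥0∞} (hf : Measurable f) (c : ℝ≥0∞) (N : ℕ) :
    c * μ {ω | ∃ n ≤ N, c * (box (0 : V d) n).card < ∑ y ∈ box (0 : V d) n, f (y +ᵥ ω)} ≤
      10 ^ d * ∫⁻ ω, f ω ∂μ := by
  classical
  set E := {ω | ∃ n ≤ N, c * (box (0 : V d) n).card < ∑ y ∈ box (0 : V d) n, f (y +ᵥ ω)}
  have hE : MeasurableSet E := by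
    simp only [E, Set.ofPred_exists]
    exact MeasurableSet.iUnion fun n ↦ (MeasurableSet.const (n ≤ N)).inter
      (measurableSet_lt measurable_const (measurable_sum_vadd hf _))
  have hpoint (ω : Ω) : c * ∑ x ∈ box (0 : V d) N, E.indicator 1 (x +ᵥ ω) ≤
      5 ^ d * ∑ y ∈ box (0 : V d) (2 * N), f (y +ᵥ ω) := by
    refine le_trans (le_of_eq ?_) (mul_card_exists_lt_sum_box_le (fun y ↦ f (y +ᵥ ω)) c (N := N)
      fun x hx ↦ two_mul N ▸ box_subset_box_zero hx)
    simp [E, Set.indicator_apply, sum_box_vadd, card_box]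
  have hint : (box (0 : V d) N).card * (c * μ E) ≤
      (box (0 : V d) N).card * (10 ^ d * ∫⁻ ω, f ω ∂μ) :=
    calc (box (0 : V d) N).card * (c * μ E)
        = ∫⁻ ω, c * ∑ x ∈ box (0 : V d) N, E.indicator 1 (x +ᵥ ω) ∂μ := by
          rw [lintegral_const_mul _ (measurable_sum_vadd (measurable_one.indicator hE) _),
            lintegral_sum_vadd (measurable_one.indicator hE), lintegral_indicator_one hE,
            mul_left_comm]
      _ ≤ ∫⁻ ω, 5 ^ d * ∑ y ∈ box (0 : V d) (2 * N), f (y +ᵥ ω) ∂μ := lintegral_mono hpoint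
      _ = 5 ^ d * ((box (0 : V d) (2 * N)).card * ∫⁻ ω, f ω ∂μ) := by
          rw [lintegral_const_mul _ (measurable_sum_vadd hf _), lintegral_sum_vadd hf]
      _ ≤ 5 ^ d * ((2 ^ d * (box (0 : V d) N).card : ℕ) * ∫⁻ ω, f ω ∂μ) := by
          gcongr; exact card_box_mul_le one_le_two 0 N
      _ = (box (0 : V d) N).card * (10 ^ d * ∫⁻ ω, f ω ∂μ) := by
          push_cast
          rw [show (10 : ℝ≥0∞) = 5 * 2 by norm_num, mul_pow]
          ring
  refine (ENNReal.mul_le_mul_iff_right ?_ (ENNReal.natCast_ne_top _)).1 hint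
  simpa using (box_nonempty (0 : V d) N).ne_empty

theorem maximal_ergodic_inequality {f : Ω → ℝ≥0∞} (hf : Measurable f) (c : ℝ≥0∞) :
    c * μ {ω | ∃ n, c * (box (0 : V d) n).card < ∑ y ∈ box (0 : V d) n, f (y +ᵥ ω)} ≤
      10 ^ d * ∫⁻ ω, f ω ∂μ := by
  have hunion : {ω | ∃ n, c * (box (0 : V d) n).card < ∑ y ∈ box (0 : V d) n, f (y +ᵥ ω)} =
      ⋃ N, {ω | ∃ n ≤ N, c * (box (0 : V d) n).card < ∑ y ∈ box (0 : V d) n, f (y +ᵥ ω)} := by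
    ext ω
    simp only [Set.mem_ofPred_eq, Set.mem_iUnion]
    exact ⟨fun ⟨n, hn⟩ ↦ ⟨n, n, le_rfl, hn⟩, fun ⟨_, n, _, hn⟩ ↦ ⟨n, hn⟩⟩
  rw [hunion, Monotone.measure_iUnion, ENNReal.mul_iSup]
  · exact iSup_le (mul_measure_exists_le_lt_sum_box_le hf c)
  · exact fun N M hNM ω ⟨n, hn, h⟩ ↦ ⟨n, hn.trans hNM, h⟩

end MaximalInequality

section Density

variable {Ω : Type*} [AddAction (V d) Ω]

open Classical in
/-- The number of sites `y ∈ S` at which the event `A` occurs, i.e. `τ_y ω ∈ A`. -/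
def visits (A : Set Ω) (S : Finset (V d)) (ω : Ω) : ℕ := (S.filter fun y ↦ y +ᵥ ω ∈ A).card

lemma natCast_visits {R : Type*} [NonAssocSemiring R] (A : Set Ω) (S : Finset (V d)) (ω : Ω) :
    (visits A S ω : R) = ∑ y ∈ S, A.indicator 1 (y +ᵥ ω) := by
  classical simp [visits, Set.indicator_apply]

lemma visits_mono (A : Set Ω) {S T : Finset (V d)} (h : S ⊆ T) (ω : Ω) :
    visits A S ω ≤ visits A T ω := by
  classical exact Finset.card_le_card (Finset.filter_subset_filter _ h)

lemma visits_le_add_visits_diff (A G : Set Ω) (S : Finset (V d)) (ω : Ω) :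
    visits G S ω ≤ visits A S ω + visits (G \ A) S ω := by
  classical
  refine le_trans (Finset.card_le_card fun y hy ↦ ?_) (Finset.card_union_le _ _)
  by_cases hA : y +ᵥ ω ∈ A <;> simp_all

lemma lt_two_mul_floor_add_one (a : ℝ) : a < 2 * ⌊a⌋₊ + 1 := by
  linarith [Nat.lt_floor_add_one a, Nat.cast_nonneg (α := ℝ) ⌊a⌋₊]

lemma card_box_add_floor_le {δ : ℝ} (hδ : 0 < δ) (n : ℕ) (x : V d) :
    ((box (0 : V d) (n + ⌊δ * n⌋₊)).card : ℝ) ≤ (2 / δ + 1) ^ d * (box x ⌊δ * n⌋₊).card := by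
  rw [card_box, card_box]
  push_cast
  rw [← mul_pow]
  gcongr
  have h : 2 / δ * (δ * n) ≤ 2 / δ * (2 * ⌊δ * n⌋₊ + 1) := by
    gcongr; exact (lt_two_mul_floor_add_one _).le
  rw [← mul_assoc, div_mul_cancel₀ _ hδ.ne'] at h
  linarith

variable [MeasurableSpace Ω]

variable (d) in
/-- The event `A` occurs with frequency at least its probability (up to `ε`), uniformly over all
boxes of radius `⌊δ n⌋` centred in `[-n, n]^d`, once `n` is large. -/
def HasLowerDensityInBoxes (μ : Measure Ω) (A : Set Ω) : Prop :=
  ∀ δ : ℝ, 0 < δ → ∀ ε : ℝ, 0 < ε → ∀ᵐ ω ∂μ, ∀ᶠ n : ℕ in atTop, ∀ x ∈ box (0 : V d) n,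
    (μ.real A - ε) * (box x ⌊δ * n⌋₊).card ≤ visits A (box x ⌊δ * n⌋₊) ω

variable [MeasurableConstVAdd (V d) Ω] {μ : Measure Ω} [VAddInvariantMeasure (V d) Ω μ]

lemma ae_eventually_forall_visits_box_le {F : ℕ → Set Ω} (hF : ∀ k, MeasurableSet (F k))
    (hsum : ∑' k, μ (F k) ≠ ∞) {c : ℝ} (hc : 0 < c) :
    ∀ᵐ ω ∂μ, ∀ᶠ k in atTop, ∀ n,
      (visits (F k) (box (0 : V d) n) ω : ℝ) ≤ c * (box (0 : V d) n).card := by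
  have hc' : ENNReal.ofReal c ≠ 0 := by simpa using hc
  let E (k : ℕ) : Set Ω := {ω | ∃ n, ENNReal.ofReal c * (box (0 : V d) n).card <
    ∑ y ∈ box (0 : V d) n, (F k).indicator 1 (y +ᵥ ω)}
  have hE (k : ℕ) : μ (E k) ≤ 10 ^ d / ENNReal.ofReal c * μ (F k) := by
    rw [div_eq_mul_inv, mul_right_comm, ← div_eq_mul_inv, ENNReal.le_div_iff_mul_le (.inl hc')
      (.inl ENNReal.ofReal_ne_top), mul_comm, ← lintegral_indicator_one (hF k)]
    exact maximal_ergodic_inequality (measurable_one.indicator (hF k)) _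
  have hsumE : ∑' k, μ (E k) ≠ ∞ := ne_top_of_le_ne_top
    (ENNReal.tsum_mul_left ▸ ENNReal.mul_ne_top (by finiteness) hsum) (ENNReal.tsum_le_tsum hE)
  filter_upwards [ae_eventually_notMem hsumE] with ω hω
  filter_upwards [hω] with k hk n
  have hn := not_lt.1 (not_exists.1 hk n)
  rwa [← natCast_visits, ← ENNReal.ofReal_natCast, ← ENNReal.ofReal_natCast,
    ← ENNReal.ofReal_mul hc.le, ENNReal.ofReal_le_ofReal_iff (by positivity)] at hn

lemma exists_seq_tsum_measure_diff_ne_top [IsFiniteMeasure μ] {𝒜 : Set (Set Ω)}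
    (h𝒜 : μ.MeasureDense 𝒜) {A : Set Ω} (hA : MeasurableSet A) :
    ∃ G : ℕ → Set Ω, (∀ k, G k ∈ 𝒜) ∧ ∑' k, μ (G k \ A) ≠ ∞ ∧
      Tendsto (fun k ↦ μ.real (G k)) atTop (𝓝 (μ.real A)) := by
  choose G hG hAG using fun k : ℕ ↦ h𝒜.approx A hA (measure_ne_top μ A) ((1 / 2) ^ k)
    (by positivity)
  have hgeom : Tendsto (fun k : ℕ ↦ (1 / 2 : ℝ) ^ k) atTop (𝓝 0) :=
    tendsto_pow_atTop_nhds_zero_of_lt_one (by norm_num) (by norm_num)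
  refine ⟨G, hG, ?_, tendsto_iff_norm_sub_tendsto_zero.2 (squeeze_zero (fun _ ↦ norm_nonneg _)
    (fun k ↦ ?_) hgeom)⟩
  · refine ne_top_of_le_ne_top summable_geometric_two.tsum_ofReal_ne_top
      (ENNReal.tsum_le_tsum fun k ↦ ?_)
    exact (measure_mono fun ω hω ↦ .inr hω).trans (hAG k).le
  · rw [Real.norm_eq_abs, abs_sub_comm]
    have hsymm := abs_measureReal_sub_le_measureReal_symmDiff (μ := μ) hA.nullMeasurableSet
      (h𝒜.measurable _ (hG k)).nullMeasurableSet
    exact hsymm.trans (ENNReal.toReal_le_of_le_ofReal (by positivity) (hAG k).le)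

theorem HasLowerDensityInBoxes.of_measureDense [IsFiniteMeasure μ] {𝒜 : Set (Set Ω)}
    (h𝒜 : μ.MeasureDense 𝒜) (hdens : ∀ G ∈ 𝒜, HasLowerDensityInBoxes d μ G) {A : Set Ω}
    (hA : MeasurableSet A) : HasLowerDensityInBoxes d μ A := by
  intro δ hδ ε hε
  obtain ⟨G, hG, hsum, hlim⟩ := exists_seq_tsum_measure_diff_ne_top h𝒜 hA
  have hexcess := ae_eventually_forall_visits_box_le (d := d)
    (fun k ↦ (h𝒜.measurable _ (hG k)).diff hA) hsum
    (show 0 < ε / 3 / (2 / δ + 1) ^ d by positivity)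
  filter_upwards [hexcess, ae_all_iff.2 fun k ↦ hdens _ (hG k) δ hδ (ε / 3) (by positivity)]
    with ω hω hGω
  obtain ⟨k, hk, hμk⟩ :=
    (hω.and (hlim.eventually (lt_mem_nhds (sub_lt_self _ (by positivity : 0 < ε / 3))))).exists
  filter_upwards [hGω k] with n hn x hx
  have hexcess_box : (visits (G k \ A) (box x ⌊δ * n⌋₊) ω : ℝ) ≤
      ε / 3 * (box x ⌊δ * n⌋₊).card :=
    calc (visits (G k \ A) (box x ⌊δ * n⌋₊) ω : ℝ)
        ≤ visits (G k \ A) (box 0 (n + ⌊δ * n⌋₊)) ω := by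
          exact_mod_cast visits_mono _ (box_subset_box_zero hx) ω
      _ ≤ ε / 3 / (2 / δ + 1) ^ d * (box (0 : V d) (n + ⌊δ * n⌋₊)).card := hk _
      _ ≤ ε / 3 / (2 / δ + 1) ^ d * ((2 / δ + 1) ^ d * (box x ⌊δ * n⌋₊).card) := by
          gcongr; exact card_box_add_floor_le hδ n x
      _ = ε / 3 * (box x ⌊δ * n⌋₊).card := by field_simp
  have hsplit : (visits (G k) (box x ⌊δ * n⌋₊) ω : ℝ) ≤
      visits A (box x ⌊δ * n⌋₊) ω + visits (G k \ A) (box x ⌊δ * n⌋₊) ω := by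
    exact_mod_cast visits_le_add_visits_diff A (G k) _ ω
  have hdensity : (μ.real A - ε / 3) * ((box x ⌊δ * n⌋₊).card : ℝ) ≤
      μ.real (G k) * (box x ⌊δ * n⌋₊).card := by gcongr
  linarith [hn x hx]

end Density

section Subgaussian

variable {Ω ι κ : Type*} [MeasurableSpace Ω] {μ : Measure Ω} {X : ι → Ω → ℝ}

lemma hasSubgaussianMGF_of_le {Y : Ω → ℝ} {a b : ℝ≥0} (hY : HasSubgaussianMGF Y a μ)
    (hab : a ≤ b) : HasSubgaussianMGF Y b μ where
  integrable_exp_mul := hY.integrable_exp_mul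
  mgf_le t := (hY.mgf_le t).trans (by gcongr)

variable [IsZeroOrProbabilityMeasure μ] {c : ι → ℝ≥0} {S : Finset ι}

lemma hasSubgaussianMGF_sum (hX : ∀ i ∈ S, HasSubgaussianMGF (X i) (c i) μ) :
    HasSubgaussianMGF (fun ω ↦ ∑ i ∈ S, X i ω) ((∑ i ∈ S, (c i).sqrt) ^ 2) μ := by
  classical
  induction S using Finset.induction_on with
  | empty => simp
  | insert i S hi ih =>
    simp only [Finset.sum_insert hi]
    rw [Finset.forall_mem_insert] at hX
    simpa only [NNReal.sqrt_sq] using hX.1.add (ih hX.2)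

-- Cauchy–Schwarz over the colours absorbs the dependence between different classes.
lemma hasSubgaussianMGF_sum_of_coloring [Fintype κ] (color : ι → κ)
    (hind : ∀ k, iIndepFun (fun i : {i // color i = k} ↦ X i) μ)
    (hX : ∀ i ∈ S, HasSubgaussianMGF (X i) (c i) μ) :
    HasSubgaussianMGF (fun ω ↦ ∑ i ∈ S, X i ω) (Fintype.card κ * ∑ i ∈ S, c i) μ := by
  classical
  have hclass (k : κ) : HasSubgaussianMGF (fun ω ↦ ∑ i ∈ S with color i = k, X i ω)
      (∑ i ∈ S with color i = k, c i) μ := by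
    have h := HasSubgaussianMGF.sum_of_iIndepFun (hind k) (s := S.subtype (color · = k))
      (c := fun i ↦ c i) fun i hi ↦ hX i (Finset.mem_subtype.1 hi)
    have hsum (ω : Ω) : ∑ i ∈ S.subtype (color · = k), X i ω = ∑ i ∈ S with color i = k, X i ω :=
      Finset.sum_subtype_eq_sum_filter fun i ↦ X i ω
    simpa only [Finset.sum_subtype_eq_sum_filter c, hsum] using h
  have hsum := hasSubgaussianMGF_sum (S := Finset.univ) fun k _ ↦ hclass k
  simp only [fun ω ↦ Finset.sum_fiberwise S color (fun i ↦ X i ω)] at hsum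
  refine hasSubgaussianMGF_of_le hsum (sq_sum_le_card_mul_sum_sq.trans_eq ?_)
  simp only [NNReal.sq_sqrt, Finset.sum_fiberwise S color c, Finset.card_univ]

end Subgaussian

section Concentration

variable {Ω : Type*} [MeasurableSpace Ω] [AddAction (V d) Ω] {μ : Measure Ω} {A : Set Ω}

theorem measureReal_visits_lt_le_of_coloring [MeasurableConstVAdd (V d) Ω]
    [IsProbabilityMeasure μ] [VAddInvariantMeasure (V d) Ω μ] (hA : MeasurableSet A)
    {κ : Type*} [Fintype κ] (color : V d → κ)
    (hind : ∀ k, iIndepFun (fun (y : {y // color y = k}) ω ↦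
      A.indicator (1 : Ω → ℝ) (y.1 +ᵥ ω)) μ) {ε : ℝ} (hε : 0 < ε) (S : Finset (V d)) :
    μ.real {ω | (visits A S ω : ℝ) < (μ.real A - ε) * S.card} ≤
      Real.exp (-(2 * ε ^ 2 / Fintype.card κ * S.card)) := by
  have : Nonempty κ := ⟨color 0⟩
  have hmeas (y : V d) : Measurable fun ω ↦ A.indicator (1 : Ω → ℝ) (y +ᵥ ω) :=
    (measurable_one.indicator hA).comp (measurable_const_vadd y)
  have hmean (y : V d) : ∫ ω, A.indicator (1 : Ω → ℝ) (y +ᵥ ω) ∂μ = μ.real A := by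
    rw [(measurePreserving_vadd y μ).integral_comp (measurableEmbedding_const_vadd y),
      integral_indicator_one hA]
  have hsubG (y : V d) : HasSubgaussianMGF
      (fun ω ↦ μ.real A - A.indicator (1 : Ω → ℝ) (y +ᵥ ω)) ((1 / 2) ^ 2) μ := by
    have h := (hasSubgaussianMGF_of_mem_Icc (μ := μ) (a := 0) (b := 1) (hmeas y).aemeasurable
      (ae_of_all _ fun ω ↦ ⟨Set.indicator_nonneg (by simp) _,
        Set.indicator_le_self' (by simp) _⟩)).neg
    simpa [hmean, Pi.neg_def] using h
  have hsum := hasSubgaussianMGF_sum_of_coloring color (S := S)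
    (fun k ↦ (hind k).comp (fun _ t ↦ μ.real A - t) fun _ ↦ by fun_prop) fun y _ ↦ hsubG y
  calc μ.real {ω | (visits A S ω : ℝ) < (μ.real A - ε) * S.card}
      ≤ μ.real {ω | ε * S.card ≤ ∑ y ∈ S, (μ.real A - A.indicator 1 (y +ᵥ ω))} := by
        refine measureReal_mono fun ω hω ↦ ?_
        simp only [Set.mem_ofPred_eq, natCast_visits, Finset.sum_sub_distrib, Finset.sum_const,
          nsmul_eq_mul] at hω ⊢
        linarith
    _ ≤ _ := hsum.measure_ge_le (by positivity)
    _ = Real.exp (-(2 * ε ^ 2 / Fintype.card κ * S.card)) := by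
        congr 1
        push_cast [Finset.sum_const, nsmul_eq_mul]
        field_simp

lemma summable_two_mul_add_one_pow_mul_exp (k : ℕ) {c : ℝ} (hc : 0 < c) :
    Summable fun n : ℕ ↦ (2 * n + 1 : ℝ) ^ k * Real.exp (-(c * n)) := by
  have h := ((summable_nat_add_iff 1).2
    (Real.summable_pow_mul_exp_neg_nat_mul k hc)).mul_left (2 ^ k * Real.exp c)
  refine h.of_nonneg_of_le (fun n ↦ by positivity) fun n ↦ ?_
  calc (2 * n + 1 : ℝ) ^ k * Real.exp (-(c * n))
      ≤ (2 * (n + 1)) ^ k * Real.exp (-(c * n)) := by gcongr; linarith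
    _ = 2 ^ k * Real.exp c * ((n + 1 : ℕ) ^ k * Real.exp (-c * (n + 1 : ℕ))) := by
      rw [mul_pow, mul_mul_mul_comm, ← Real.exp_add]
      push_cast
      ring_nf

lemma le_card_box_floor [NeZero d] (a : ℝ) (x : V d) : a ≤ (box x ⌊a⌋₊).card := by
  rw [card_box]
  push_cast
  have hone : (1 : ℝ) ≤ 2 * ⌊a⌋₊ + 1 := by linarith [Nat.cast_nonneg (α := ℝ) ⌊a⌋₊]
  exact (lt_two_mul_floor_add_one a).le.trans (le_self_pow₀ hone (NeZero.ne d))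

theorem HasLowerDensityInBoxes.of_measureReal_le_exp [NeZero d] [IsFiniteMeasure μ]
    (h : ∀ ε : ℝ, 0 < ε → ∃ c : ℝ, 0 < c ∧ ∀ S : Finset (V d),
      μ.real {ω | (visits A S ω : ℝ) < (μ.real A - ε) * S.card} ≤ Real.exp (-(c * S.card))) :
    HasLowerDensityInBoxes d μ A := by
  intro δ hδ ε hε
  obtain ⟨c, hc, hexp⟩ := h ε hε
  let E (n : ℕ) : Set Ω := ⋃ x ∈ box (0 : V d) n,
    {ω | (visits A (box x ⌊δ * n⌋₊) ω : ℝ) < (μ.real A - ε) * (box x ⌊δ * n⌋₊).card}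
  have hE (n : ℕ) : μ.real (E n) ≤ (2 * n + 1) ^ d * Real.exp (-(c * δ * n)) :=
    calc μ.real (E n) ≤ ∑ x ∈ box (0 : V d) n, Real.exp (-(c * (box x ⌊δ * n⌋₊).card)) :=
          (measureReal_biUnion_finset_le _ _).trans (Finset.sum_le_sum fun _ _ ↦ hexp _)
      _ ≤ ∑ _x ∈ box (0 : V d) n, Real.exp (-(c * δ * n)) := by
          refine Finset.sum_le_sum fun x _ ↦ Real.exp_le_exp.2 (neg_le_neg ?_)
          rw [mul_assoc]
          exact mul_le_mul_of_nonneg_left (le_card_box_floor _ x) hc.le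
      _ = (2 * n + 1) ^ d * Real.exp (-(c * δ * n)) := by simp [card_box]
  have hsum : ∑' n, μ (E n) ≠ ∞ := ne_top_of_le_ne_top
    (summable_two_mul_add_one_pow_mul_exp d (mul_pos hc hδ)).tsum_ofReal_ne_top
    (ENNReal.tsum_le_tsum fun n ↦ by
      rw [← ofReal_measureReal (measure_ne_top μ (E n))]
      exact ENNReal.ofReal_le_ofReal (hE n))
  filter_upwards [ae_eventually_notMem hsum] with ω hω
  filter_upwards [hω] with n hn x hx
  exact not_lt.1 fun hlt ↦ hn (Set.mem_biUnion hx hlt)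

end Concentration

lemma iIndepFun_infinitePi_blocks {ι E α β : Type*} [MeasurableSpace E] (m : Measure E)
    [IsProbabilityMeasure m] {f : α → β → ι} (hf : Function.Injective fun q : α × β ↦ f q.1 q.2) :
    iIndepFun (fun (a : α) (ω : ι → E) (b : β) ↦ ω (f a b))
      (Measure.infinitePi fun _ : ι ↦ m) := by
  have hmap {γ : Type _} {g : γ → ι} (hg : Function.Injective g) :
      (Measure.infinitePi fun _ : ι ↦ m).map (fun ω c ↦ ω (g c)) =
        Measure.infinitePi fun _ : γ ↦ m :=
    Measure.map_infinitePi_infinitePi_of_inj (P := fun _ : ι ↦ m) hg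
  have hblock (a : α) : (Measure.infinitePi fun _ : ι ↦ m).map (fun ω b ↦ ω (f a b)) =
      Measure.infinitePi fun _ : β ↦ m :=
    Measure.map_infinitePi_infinitePi_of_inj (P := fun _ : ι ↦ m)
      fun b b' h ↦ congrArg Prod.snd (@hf (a, b) (a, b') h)
  rw [iIndepFun_iff_map_fun_eq_infinitePi_map (by fun_prop)]
  simp_rw [hblock]
  rw [← Measure.infinitePi_map_curry (fun (_ : α) (_ : β) ↦ m), ← hmap hf,
    Measure.map_map (by fun_prop) (by fun_prop)]
  rfl

/-- The lattice acts on configurations by the shifts `τ_x`. -/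
instance : AddAction (V d) (Config d) where
  vadd := shift
  zero_vadd ω := by
    funext b
    change ω (b.1 + 0, b.2) = ω b
    rw [add_zero]
  add_vadd x y ω := by
    funext b
    change ω (b.1 + (x + y), b.2) = ω (b.1 + x + y, b.2)
    rw [add_assoc]

lemma vadd_apply (x : V d) (ω : Config d) (b : EdgeIx d) : (x +ᵥ ω) b = ω (b.1 + x, b.2) := rfl

instance : MeasurableConstVAdd (V d) (Config d) where
  measurable_const_vadd x := measurable_pi_lambda _ fun b ↦ measurable_pi_apply (b.1 + x, b.2)

namespace IsBernoulli

variable {q : ℝ} {P : Measure (Config d)}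

lemma eq_infinitePi [NeZero d] (hP : IsBernoulli d q P) :
    ∃ (m : Measure Bool) (_ : IsProbabilityMeasure m), P = Measure.infinitePi fun _ ↦ m := by
  have := hP.1
  let b₀ : EdgeIx d := (0, 0)
  have hm : IsProbabilityMeasure (P.map fun ω ↦ ω b₀) :=
    Measure.isProbabilityMeasure_map (measurable_pi_apply b₀).aemeasurable
  have hbond (a : Bool) : P.map (fun ω ↦ ω b₀) {a} = ENNReal.ofReal (if a then q else 1 - q) := by
    rw [Measure.map_apply (measurable_pi_apply b₀) (measurableSet_singleton a)]
    simpa [Set.preimage] using hP.2 {b₀} fun _ ↦ a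
  refine ⟨P.map fun ω ↦ ω b₀, hm, IsProjectiveLimit.unique (fun s ↦ ?_)
    (Measure.isProjectiveLimit_infinitePi _)⟩
  refine Measure.ext_of_singleton fun a ↦ ?_
  have hcyl : (s.restrict ⁻¹' {a} : Set (Config d)) =
      {ω | ∀ b ∈ s, ω b = if h : b ∈ s then a ⟨b, h⟩ else true} := by
    ext ω
    simp +contextual [funext_iff]
  rw [Measure.map_apply (by fun_prop) (measurableSet_singleton a), Measure.pi_singleton, hcyl,
    hP.2 s fun b ↦ if h : b ∈ s then a ⟨b, h⟩ else true, ← Finset.prod_coe_sort]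
  simp [hbond]

lemma vaddInvariantMeasure [NeZero d] (hP : IsBernoulli d q P) :
    VAddInvariantMeasure (V d) (Config d) P := by
  obtain ⟨m, hm, rfl⟩ := hP.eq_infinitePi
  refine ⟨fun x s hs ↦ ?_⟩
  have hinj : Function.Injective fun b : EdgeIx d ↦ (b.1 + x, b.2) := fun b b' h ↦ by
    simpa [Prod.ext_iff] using h
  rw [← Measure.map_apply (measurable_const_vadd x) hs]
  exact congrArg (· s) (Measure.map_infinitePi_infinitePi_of_inj (P := fun _ : EdgeIx d ↦ m) hinj)

end IsBernoulli

/-- Reduction of the coordinates of a lattice site modulo `m`. Its fibres are the sparse classes of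
sites along which the translates of a cylinder event are independent. -/
def residue (d m : ℕ) : V d →+ (Fin d → ZMod m) := (Int.castAddHom (ZMod m)).compLeft (Fin d)

lemma injOn_residue_box (M : ℕ) :
    Set.InjOn (residue d (2 * M + 1)) (box (0 : V d) M : Set (V d)) := by
  intro x hx y hy hxy
  rw [Finset.mem_coe, mem_box] at hx hy
  funext i
  have hdvd : ((2 * M + 1 : ℕ) : ℤ) ∣ y i - x i :=
    (ZMod.intCast_eq_intCast_iff_dvd_sub _ _ _).1 (congrFun hxy i)
  have hlt : |y i - x i| < (2 * M + 1 : ℕ) := by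
    simp only [Pi.zero_apply, sub_zero] at hx hy
    push_cast
    linarith [abs_sub (y i) (x i), hx i, hy i]
  linarith [Int.eq_zero_of_abs_lt_dvd hdvd hlt]

lemma injective_translate_of_residue {M : ℕ} {s : Finset (EdgeIx d)}
    (hs : ∀ b ∈ s, b.1 ∈ box 0 M) (k : Fin d → ZMod (2 * M + 1)) :
    Function.Injective fun q : {y // residue d (2 * M + 1) y = k} × s ↦
      ((q.2.1.1 + q.1.1, q.2.1.2) : EdgeIx d) := by
  rintro ⟨⟨y, hy⟩, ⟨⟨b, i⟩, hb⟩⟩ ⟨⟨y', hy'⟩, ⟨⟨b', i'⟩, hb'⟩⟩ h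
  simp only [Prod.mk.injEq] at h
  obtain ⟨hadd, rfl⟩ := h
  have hres := congrArg (residue d (2 * M + 1)) hadd
  rw [map_add, map_add, hy, hy', add_left_inj] at hres
  obtain rfl : b = b' := injOn_residue_box M (hs _ hb) (hs _ hb') hres
  obtain rfl : y = y' := add_left_cancel hadd
  rfl

namespace IsBernoulli

variable [NeZero d] {q : ℝ} {P : Measure (Config d)}

lemma exists_coloring_iIndepFun (hP : IsBernoulli d q P) {G : Set (Config d)}
    (hG : G ∈ measurableCylinders fun _ : EdgeIx d ↦ Bool) :
    ∃ (m : ℕ) (_ : NeZero m), ∀ k, iIndepFun (fun (y : {y // residue d m y = k}) ω ↦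
      G.indicator (1 : Config d → ℝ) (y.1 +ᵥ ω)) P := by
  obtain ⟨m, hm, rfl⟩ := hP.eq_infinitePi
  obtain ⟨s, T, hT, rfl⟩ := (mem_measurableCylinders _).1 hG
  obtain ⟨M, hM⟩ := exists_subset_box_zero (s.image Prod.fst)
  refine ⟨2 * M + 1, inferInstance, fun k ↦ ?_⟩
  have hblocks := iIndepFun_infinitePi_blocks m
    (f := fun (y : {y // residue d (2 * M + 1) y = k}) (b : s) ↦ (b.1.1 + y.1, b.1.2))
    (injective_translate_of_residue (fun b hb ↦ hM (Finset.mem_image_of_mem _ hb)) k)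
  exact hblocks.comp (fun _ ↦ T.indicator 1) fun _ ↦ measurable_one.indicator hT

theorem hasLowerDensityInBoxes (hP : IsBernoulli d q P) {A : Set (Config d)}
    (hA : MeasurableSet A) : HasLowerDensityInBoxes d P A := by
  have := hP.1
  have := hP.vaddInvariantMeasure
  have hdense := Measure.MeasureDense.of_generateFrom_isSetAlgebra_finite (μ := P)
    (isSetAlgebra_measurableCylinders (α := fun _ : EdgeIx d ↦ Bool))
    generateFrom_measurableCylinders.symm
  refine .of_measureDense hdense (fun G hG ↦ .of_measureReal_le_exp fun ε hε ↦ ?_) hA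
  obtain ⟨m, hm, hind⟩ := hP.exists_coloring_iIndepFun hG
  exact ⟨2 * ε ^ 2 / Fintype.card (Fin d → ZMod m), by positivity,
    measureReal_visits_lt_le_of_coloring (hdense.measurable G hG) _ hind hε⟩

end IsBernoulli

section Cluster

lemma isOpen_setOf_edgeOpen (x e : V d) : IsOpen {ω : Config d | edgeOpen ω x e} := by
  have hbond (b : EdgeIx d) : IsOpen {ω : Config d | ω b = true} :=
    isOpen_discrete {true} |>.preimage (continuous_apply (A := fun _ ↦ Bool) b)
  simp only [edgeOpen, Set.ofPred_exists, Set.ofPred_or, Set.ofPred_and]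
  exact isOpen_iUnion fun i ↦ (isOpen_const.inter (hbond _)).union (isOpen_const.inter (hbond _))

lemma isOpen_setOf_isOpenPath (γ : ℕ → V d) (n : ℕ) :
    IsOpen {ω : Config d | IsOpenPath ω γ n} := by
  simp only [IsOpenPath, Set.ofPred_forall]
  exact (Set.finite_lt_nat n).isOpen_biInter fun k _ ↦
    isOpen_const.inter (isOpen_setOf_edgeOpen _ _)

lemma measurableSet_cluZero : MeasurableSet (cluZero d) := by
  simp only [cluZero, memCluster, Set.ofPred_forall, Set.ofPred_exists]
  refine MeasurableSet.iInter fun R ↦ IsOpen.measurableSet <|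
    isOpen_iUnion fun γ ↦ isOpen_iUnion fun n ↦ ?_
  exact isOpen_const.inter ((isOpen_setOf_isOpenPath γ n).inter isOpen_const)

lemma edgeOpen_vadd {ω : Config d} {v x e : V d} :
    edgeOpen (v +ᵥ ω) x e ↔ edgeOpen ω (x + v) e := by
  simp only [edgeOpen, vadd_apply, sub_add_eq_add_sub]

lemma isOpenPath_vadd {ω : Config d} {v : V d} {γ : ℕ → V d} {n : ℕ} :
    IsOpenPath (v +ᵥ ω) γ n ↔ IsOpenPath ω (fun k ↦ γ k + v) n := by
  simp only [IsOpenPath, edgeOpen_vadd, add_sub_add_right_eq_sub]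

lemma inBox_natCast_iff {x : V d} {r : ℕ} : inBox x r ↔ x ∈ box 0 r := by
  simp only [inBox, mem_box, Pi.zero_apply, sub_zero]
  exact forall_congr' fun i ↦ by norm_cast

lemma memCluster_vadd {ω : Config d} {v x : V d} (h : memCluster (v +ᵥ ω) x) :
    memCluster ω (x + v) := by
  intro R
  obtain ⟨M, hM⟩ := exists_subset_box_zero {v}
  obtain ⟨γ, n, rfl, hγ, hγn⟩ := h (R + M)
  refine ⟨fun k ↦ γ k + v, n, rfl, isOpenPath_vadd.1 hγ, fun hR ↦ hγn ?_⟩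
  have hv : v ∈ box 0 M := hM (Finset.mem_singleton_self v)
  rw [inBox_natCast_iff] at hR ⊢
  simp only [mem_box, Pi.zero_apply, Pi.add_apply, sub_zero, Nat.cast_add] at hR hv ⊢
  intro i
  have htri := abs_sub (γ n i + v i) (v i)
  rw [add_sub_cancel_right] at htri
  linarith [hR i, hv i]

lemma vadd_mem_cluZero {ω : Config d} {y : V d} : y +ᵥ ω ∈ cluZero d ↔ memCluster ω y := by
  refine ⟨fun h ↦ by simpa using memCluster_vadd h, fun h ↦ ?_⟩
  have := memCluster_vadd (ω := y +ᵥ ω) (v := -y) (x := y) (by simpa using h)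
  simpa [cluZero] using this

lemma ncard_ball_cluster {ω : Config d} {x : V d} {a : ℝ} (ha : 0 ≤ a) :
    Set.ncard {y : V d | (∀ i, |(y i : ℝ) - x i| ≤ a) ∧ memCluster ω y} =
      visits (cluZero d) (box x ⌊a⌋₊) ω := by
  classical
  rw [visits, ← Set.ncard_coe_finset]
  congr 1
  ext y
  simp [mem_box_floor ha, vadd_mem_cluZero]

lemma cluZero_zero : cluZero 0 = ∅ :=
  Set.eq_empty_of_forall_notMem fun ω hω ↦ by
    obtain ⟨γ, n, -, -, hγ⟩ := hω 0
    exact hγ fun i ↦ i.elim0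

lemma eventually_mul_pow_le_mul_card_box {δ : ℝ} (hδ : 0 < δ) {a b : ℝ} (hab : a < b) :
    ∀ᶠ n : ℕ in atTop, ∀ x : V d,
      a * (δ ^ d * (2 * n) ^ d) ≤ b * (box x ⌊δ * n⌋₊).card := by
  have hfloor : Tendsto (fun n : ℕ ↦ (2 * ⌊δ * n⌋₊ + 1 : ℝ) / n) atTop (𝓝 (2 * δ)) := by
    have h := (((tendsto_nat_floor_mul_div_atTop hδ.le).comp
      tendsto_natCast_atTop_atTop).const_mul 2).add tendsto_inv_atTop_nhds_zero_nat
    rw [add_zero] at h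
    refine h.congr fun n ↦ ?_
    simp only [Function.comp_apply]
    ring
  have hlt : a * (2 * δ) ^ d < b * (2 * δ) ^ d := by gcongr
  filter_upwards [((hfloor.pow d).const_mul b).eventually (lt_mem_nhds hlt), eventually_gt_atTop 0]
    with n hn hn0 x
  have hn0' : (0 : ℝ) < n := by exact_mod_cast hn0
  calc a * (δ ^ d * (2 * n) ^ d) = a * (2 * δ) ^ d * n ^ d := by ring
    _ ≤ b * ((2 * ⌊δ * n⌋₊ + 1) / n) ^ d * n ^ d := by gcongr
    _ = b * (box x ⌊δ * n⌋₊).card := by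
      rw [mul_assoc, ← mul_pow, div_mul_cancel₀ _ hn0'.ne', card_box]
      push_cast
      rfl

theorem cluster_density_in_balls_general {p : ℝ} {P : Measure (Config d)}
    (hP : IsBernoulli d p P) {δ : ℝ} (hδ : 0 < δ) {c : ℝ} (hc : c < 1) :
    ∀ᵐ ω ∂P, ∃ N : ℕ, ∀ n : ℕ, N ≤ n → ∀ x : V d, inBox x n →
      c * (δ ^ d * (2 * n : ℝ) ^ d * (P (cluZero d)).toReal) ≤
        Set.ncard {y : V d | (∀ i, |(y i : ℝ) - (x i : ℝ)| ≤ δ * n) ∧ memCluster ω y} := by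
  rcases (measureReal_nonneg (μ := P) (s := cluZero d)).eq_or_lt with hθ | hθ
  · rw [← measureReal_def, ← hθ]
    simp
  have : NeZero d := ⟨by rintro rfl; simp [cluZero_zero] at hθ⟩
  rw [← measureReal_def]
  set θ := P.real (cluZero d)
  have hcθ : c * θ < (1 + c) / 2 * θ := by gcongr; linarith
  filter_upwards [hP.hasLowerDensityInBoxes measurableSet_cluZero δ hδ ((1 - c) / 2 * θ)
    (mul_pos (by linarith) hθ)] with ω hω
  refine eventually_atTop.1 ?_
  filter_upwards [hω, eventually_mul_pow_le_mul_card_box hδ hcθ] with n hdens hvol x hx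
  rw [ncard_ball_cluster (by positivity)]
  linarith [hdens x (inBox_natCast_iff.1 hx), hvol x]

end Cluster

end SRWPC

open SRWPC in
/-- **Density of the infinite cluster in balls** (Lemma 4.4). -/
theorem cluster_density_in_balls
    (d : ℕ) (hd : 2 ≤ d) (p : ℝ) (hp0 : 0 < p) (hp1 : p < 1) (hpc : pc d < p)
    (P : Measure (Config d)) (hP : IsBernoulli d p P)
    (δ : ℝ) (hδ : 0 < δ) :
    ∀ᵐ ω ∂P, ∃ N : ℕ, ∀ n : ℕ, N ≤ n → ∀ x : V d,
      (∀ y : V d, (∀ i, |(y i : ℝ) - (x i : ℝ)| ≤ δ * n) → ∀ i, |(y i : ℝ)| ≤ n) →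
      δ ^ d * (2 * n : ℝ) ^ d * (P (cluZero d)).toReal / 2 ≤
        (Set.ncard {y : V d | (∀ i, |(y i : ℝ) - (x i : ℝ)| ≤ δ * n) ∧ memCluster ω y} : ℝ) := by
  filter_upwards [cluster_density_in_balls_general hP hδ one_half_lt_one] with ω ⟨N, hN⟩
  refine ⟨N, fun n hn x hx ↦ ?_⟩
  rw [div_eq_inv_mul, ← one_div]
  exact hN n hn x (hx x fun i ↦ by
    rw [sub_self, abs_zero]; positivity)
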